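/- Let G be a connected weighted graph on a finite vertex set V with positive edge susceptances and weighted Laplacian L. Let C ⊆ V be a vertex cut set, let B be a nonempty union of the vertex sets of some (but not all) connected components of G − C, and A = V ∖ (B ∪ C), so that no edge of G joins A and B. Then for every injection vector p : V → ℝ with Σ_v p_v = 0 and p supported on B ∪ C (injections only at buses of the j-th sub-graph), there exists an injection vector q : V → ℝ with Σ_v q_v = 0 and q supported on C such that: for any θ_p, θ_q with L θ_p = p and L θ_q = q, the induced flows agree on every edge of the i-th sub-graph, i.e., b_e (θ_p(u) − θ_p(v)) = b_e (θ_q(u) − θ_q(v)) for every edge e = {u,v} with both endpoints in A ∪ C. -/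

import Mathlib

open Matrix

/-- The weighted Laplacian of a graph on the finite vertex set `V` whose edges are
the pairs `{u,v}` with `w u v > 0`, carrying susceptance `w u v`. -/
def weightedLaplacian {V : Type*} [Fintype V] [DecidableEq V] (w : V → V → ℝ) :
    Matrix V V ℝ :=
  Matrix.of fun u v => if u = v then ∑ x, w u x else -(w u v)

/-!
Let `L θ = p` with `p` vanishing on `A`. Solve the Dirichlet problem on `B`: there is `φ` that
agrees with `θ` off `B` and satisfies `L φ = 0` on `B`. The injection `q = L φ` also vanishes on
`A`, because no vertex of `A` sees the change of angles on `B`; so `q` is supported on `C`. Angles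
are determined by their injections up to a constant on each connected component, so `q` induces the
flows of `φ`, which off `B` are those of `θ`.

The Dirichlet problem is solvable even when `B` swallows whole components, where the block `L_BB` is
singular: `L` is positive semidefinite, so a vector in the kernel of `L_BB`, extended by zero, lies
in the kernel of `L` and is therefore orthogonal to `L θ`.
-/

section Solvability

open scoped ComplexOrder

lemma exists_mulVec_eq_of_forall_dotProduct_eq_zero {m n K : Type*} [Fintype m] [Fintype n]
    [Field K] {M : Matrix m n K} {b : m → K} (h : ∀ z, z ᵥ* M = 0 → z ⬝ᵥ b = 0) :
    ∃ x, M *ᵥ x = b := by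
  classical
  by_contra hb
  obtain ⟨f, hfb, hf⟩ := Submodule.exists_le_ker_of_notMem (p := M.mulVecLin.range) (v := b) hb
  obtain ⟨z, rfl⟩ := (dotProductEquiv K m).surjective f
  refine hfb (h z (dotProduct_eq_zero _ fun x => ?_))
  rw [← dotProduct_mulVec]
  exact hf ⟨x, rfl⟩

variable {m n 𝕜 : Type*} [Fintype m] [Fintype n] [RCLike 𝕜] {A : Matrix n n 𝕜}

lemma exists_conjTranspose_mul_mul_mulVec_eq (hA : A.PosSemidef) (P : Matrix n m 𝕜) (y : n → 𝕜) :
    ∃ x, (Pᴴ * A * P) *ᵥ x = (Pᴴ * A) *ᵥ y := by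
  refine exists_mulVec_eq_of_forall_dotProduct_eq_zero fun z hz => ?_
  have hker : A *ᵥ (P *ᵥ star z) = 0 := by
    rw [← hA.dotProduct_mulVec_zero_iff, star_mulVec, star_star, dotProduct_mulVec,
      dotProduct_mulVec, vecMul_vecMul, vecMul_vecMul, ← Matrix.mul_assoc, hz, zero_dotProduct]
  have hzPA : z ᵥ* (Pᴴ * A) = 0 := by
    rw [← star_eq_zero, star_vecMul, conjTranspose_mul, conjTranspose_conjTranspose,
      hA.isHermitian.eq, ← mulVec_mulVec, hker]
  rw [dotProduct_mulVec, hzPA, zero_dotProduct]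

lemma exists_eq_off_and_mulVec_eq_zero_on (hA : A.PosSemidef) (s : Set n) (x : n → 𝕜) :
    ∃ y : n → 𝕜, (∀ i ∉ s, y i = x i) ∧ ∀ i ∈ s, (A *ᵥ y) i = 0 := by
  classical
  let P : Matrix n n 𝕜 := diagonal fun i => if i ∈ s then 1 else 0
  obtain ⟨z, hz⟩ := exists_conjTranspose_mul_mul_mulVec_eq hA P x
  refine ⟨x - P *ᵥ z, fun i hi => by simp [P, mulVec_diagonal, hi], fun i hi => ?_⟩
  have hPA : Pᴴ *ᵥ (A *ᵥ (x - P *ᵥ z)) = 0 := by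
    rw [mulVec_sub, mulVec_sub, mulVec_mulVec, mulVec_mulVec, mulVec_mulVec, hz, sub_self]
  simpa [P, diagonal_conjTranspose, mulVec_diagonal, hi] using congrFun hPA i

end Solvability

section WeightedLaplacian

variable {V : Type*} [Fintype V] [DecidableEq V] {w : V → V → ℝ}

lemma isSymm_weightedLaplacian (hsym : ∀ u v, w u v = w v u) : (weightedLaplacian w).IsSymm := by
  refine IsSymm.ext fun u v => ?_
  by_cases h : u = v
  · rw [h]
  · simp [weightedLaplacian, h, Ne.symm h, hsym u v]

lemma weightedLaplacian_mulVec_apply (hdiag : ∀ v, w v v = 0) (x : V → ℝ) (v : V) :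
    (weightedLaplacian w *ᵥ x) v = ∑ u, w v u * (x v - x u) := by
  have hterm (u : V) : weightedLaplacian w v u * x u =
      (if v = u then (∑ y, w v y) * x v else 0) - w v u * x u := by
    by_cases huv : v = u
    · subst huv
      simp [weightedLaplacian, hdiag]
    · simp [weightedLaplacian, huv]
  simp [mulVec, dotProduct, hterm, mul_sub, Finset.sum_mul]

lemma sum_weightedLaplacian_mulVec (hsym : ∀ u v, w u v = w v u) (hdiag : ∀ v, w v v = 0)
    (x : V → ℝ) : ∑ v, (weightedLaplacian w *ᵥ x) v = 0 := by
  simp only [weightedLaplacian_mulVec_apply hdiag, mul_sub, Finset.sum_sub_distrib]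
  rw [sub_eq_zero, Finset.sum_comm]
  simp only [hsym]

lemma two_mul_dotProduct_weightedLaplacian_mulVec (hsym : ∀ u v, w u v = w v u)
    (hdiag : ∀ v, w v v = 0) (x : V → ℝ) :
    2 * (x ⬝ᵥ weightedLaplacian w *ᵥ x) = ∑ v, ∑ u, w v u * (x v - x u) ^ 2 := by
  have hexpand : x ⬝ᵥ weightedLaplacian w *ᵥ x = ∑ v, ∑ u, x v * (w v u * (x v - x u)) := by
    simp only [dotProduct, weightedLaplacian_mulVec_apply hdiag, Finset.mul_sum]
  have hswap : ∑ v, ∑ u, x v * (w v u * (x v - x u)) =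
      ∑ v, ∑ u, x u * (w v u * (x u - x v)) := by
    rw [Finset.sum_comm]
    simp only [hsym]
  rw [two_mul, hexpand]
  nth_rewrite 2 [hswap]
  simp only [← Finset.sum_add_distrib]
  exact Finset.sum_congr rfl fun v _ => Finset.sum_congr rfl fun u _ => by ring

lemma posSemidef_weightedLaplacian (hsym : ∀ u v, w u v = w v u) (hdiag : ∀ v, w v v = 0)
    (hnonneg : ∀ u v, 0 ≤ w u v) : (weightedLaplacian w).PosSemidef := by
  refine .of_dotProduct_mulVec_nonneg
    ((conjTranspose_eq_transpose_of_trivial _).trans (isSymm_weightedLaplacian hsym).eq) fun x => ?_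
  have henergy : 0 ≤ ∑ v, ∑ u, w v u * (x v - x u) ^ 2 :=
    Finset.sum_nonneg fun v _ => Finset.sum_nonneg fun u _ =>
      mul_nonneg (hnonneg v u) (sq_nonneg _)
  rw [← two_mul_dotProduct_weightedLaplacian_mulVec hsym hdiag] at henergy
  simpa using henergy

lemma flow_eq_zero_of_weightedLaplacian_mulVec_eq_zero (hsym : ∀ u v, w u v = w v u)
    (hdiag : ∀ v, w v v = 0) (hnonneg : ∀ u v, 0 ≤ w u v) {x : V → ℝ}
    (hx : weightedLaplacian w *ᵥ x = 0) (u v : V) : w u v * (x u - x v) = 0 := by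
  have hterm (a b : V) : 0 ≤ w a b * (x a - x b) ^ 2 := mul_nonneg (hnonneg a b) (sq_nonneg _)
  have henergy := two_mul_dotProduct_weightedLaplacian_mulVec hsym hdiag x
  rw [hx, dotProduct_zero, mul_zero, eq_comm,
    Finset.sum_eq_zero_iff_of_nonneg fun a _ => Finset.sum_nonneg fun b _ => hterm a b] at henergy
  have huv := (Finset.sum_eq_zero_iff_of_nonneg fun b _ => hterm u b).1
    (henergy u (Finset.mem_univ u)) v (Finset.mem_univ v)
  simpa using huv

lemma flow_eq_of_weightedLaplacian_mulVec_eq (hsym : ∀ u v, w u v = w v u)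
    (hdiag : ∀ v, w v v = 0) (hnonneg : ∀ u v, 0 ≤ w u v) {x y : V → ℝ}
    (hxy : weightedLaplacian w *ᵥ x = weightedLaplacian w *ᵥ y) (u v : V) :
    w u v * (x u - x v) = w u v * (y u - y v) := by
  have h := flow_eq_zero_of_weightedLaplacian_mulVec_eq_zero hsym hdiag hnonneg
    (x := x - y) (by rw [mulVec_sub, hxy, sub_self]) u v
  simp only [Pi.sub_apply] at h
  linarith

lemma eq_of_reachable_of_weightedLaplacian_mulVec_eq_zero (hsym : ∀ u v, w u v = w v u)
    (hdiag : ∀ v, w v v = 0) (hnonneg : ∀ u v, 0 ≤ w u v) {x : V → ℝ}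
    (hx : weightedLaplacian w *ᵥ x = 0) {u v : V}
    (huv : (SimpleGraph.fromRel fun u v => 0 < w u v).Reachable u v) : x u = x v := by
  have hedge (a b : V) (hab : 0 < w a b) : x a = x b := by
    have hflow := flow_eq_zero_of_weightedLaplacian_mulVec_eq_zero hsym hdiag hnonneg hx a b
    exact sub_eq_zero.1 ((mul_eq_zero.1 hflow).resolve_left hab.ne')
  obtain ⟨path⟩ := huv
  induction path with
  | nil => rfl
  | cons hadj _ ih =>
    obtain ⟨-, h | h⟩ := (SimpleGraph.fromRel_adj _ _ _).1 hadj
    · exact (hedge _ _ h).trans ih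
    · exact (hedge _ _ h).symm.trans ih

lemma exists_weightedLaplacian_mulVec_eq_of_sum_eq_zero (hsym : ∀ u v, w u v = w v u)
    (hdiag : ∀ v, w v v = 0) (hnonneg : ∀ u v, 0 ≤ w u v)
    (hconn : (SimpleGraph.fromRel fun u v => 0 < w u v).Connected) {p : V → ℝ}
    (hp : ∑ v, p v = 0) : ∃ θ, weightedLaplacian w *ᵥ θ = p := by
  refine exists_mulVec_eq_of_forall_dotProduct_eq_zero fun z hz => ?_
  rw [← mulVec_transpose, (isSymm_weightedLaplacian hsym).eq] at hz
  obtain ⟨a⟩ := hconn.nonempty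
  have hconst (v : V) : z v = z a :=
    eq_of_reachable_of_weightedLaplacian_mulVec_eq_zero hsym hdiag hnonneg hz
      (hconn.preconnected v a)
  simp only [dotProduct, hconst, ← Finset.mul_sum, hp, mul_zero]

lemma weightedLaplacian_mulVec_apply_congr (hdiag : ∀ v, w v v = 0) {x y : V → ℝ} {v : V}
    (hv : x v = y v) (hxy : ∀ u, w v u ≠ 0 → x u = y u) :
    (weightedLaplacian w *ᵥ x) v = (weightedLaplacian w *ᵥ y) v := by
  rw [weightedLaplacian_mulVec_apply hdiag, weightedLaplacian_mulVec_apply hdiag]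
  refine Finset.sum_congr rfl fun u _ => ?_
  by_cases hu : w v u = 0
  · rw [hu, zero_mul, zero_mul]
  · rw [hv, hxy u hu]

end WeightedLaplacian

/-- On a graph with several components, an injection vector has angles only if it is balanced on
each component; solvability of both injections therefore takes the place of zero sum. -/
theorem cut_set_replicates_injections_general {V : Type*} [Fintype V] [DecidableEq V]
    (w : V → V → ℝ)
    (hsym : ∀ u v, w u v = w v u)
    (hdiag : ∀ v, w v v = 0)
    (hnonneg : ∀ u v, 0 ≤ w u v)
    (C B : Finset V) (hCB : Disjoint C B)
    (A : Finset V) (hA : A = (C ∪ B)ᶜ)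
    (hsep : ∀ a ∈ A, ∀ b ∈ B, w a b = 0) :
    ∀ p : V → ℝ, (∃ θ, weightedLaplacian w *ᵥ θ = p) → (∀ v ∈ A, p v = 0) →
      ∃ q : V → ℝ, (∃ φ, weightedLaplacian w *ᵥ φ = q) ∧ (∀ v, v ∉ C → q v = 0) ∧
        ∀ θp θq : V → ℝ,
          weightedLaplacian w *ᵥ θp = p →
          weightedLaplacian w *ᵥ θq = q →
          ∀ u ∈ A ∪ C, ∀ v ∈ A ∪ C,
            w u v * (θp u - θp v) = w u v * (θq u - θq v) := by
  rintro p ⟨θ, rfl⟩ hθA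
  obtain ⟨φ, hφ, hφB⟩ := exists_eq_off_and_mulVec_eq_zero_on
    (posSemidef_weightedLaplacian hsym hdiag hnonneg) B θ
  have hAC : ∀ v ∈ A ∪ C, v ∉ B := by
    simp only [hA, Finset.mem_union, Finset.mem_compl]
    rintro v (hv | hv)
    · exact fun hvB => hv (Or.inr hvB)
    · exact Finset.disjoint_left.1 hCB hv
  refine ⟨_, ⟨φ, rfl⟩, fun v hvC => ?_, fun θp θq hθp hθq u hu v hv => ?_⟩
  · by_cases hvB : v ∈ B
    · exact hφB v hvB
    have hvA : v ∈ A := by simp [hA, hvC, hvB]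
    rw [← hθA v hvA]
    exact weightedLaplacian_mulVec_apply_congr hdiag (hφ v hvB) fun u hvu =>
      hφ u fun huB => hvu (hsep v hvA u huB)
  · rw [flow_eq_of_weightedLaplacian_mulVec_eq hsym hdiag hnonneg hθp,
      flow_eq_of_weightedLaplacian_mulVec_eq hsym hdiag hnonneg hθq,
      hφ u (hAC u hu), hφ v (hAC v hv)]

/-- Proposition 2.  Decompose the connected grid by a vertex cut set `C`: `B` is a
nonempty union of some (but not all) of the connected components of `G − C`,
`A = V ∖ (B ∪ C)` is nonempty, and no edge joins `A` and `B`.  Then for every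
balanced injection vector `p` supported on `B ∪ C` there is a balanced injection
vector `q` supported on `C` such that for any angle solutions `L θp = p` and
`L θq = q`, the induced flows agree on every edge with both endpoints in `A ∪ C`. -/
theorem cut_set_replicates_injections {V : Type*} [Fintype V] [DecidableEq V]
    (w : V → V → ℝ)
    (hsym : ∀ u v, w u v = w v u)
    (hdiag : ∀ v, w v v = 0)
    (hnonneg : ∀ u v, 0 ≤ w u v)
    (hconn : (SimpleGraph.fromRel fun u v => 0 < w u v).Connected)
    (C B : Finset V) (hCB : Disjoint C B) (hB : B.Nonempty)
    (A : Finset V) (hA : A = (C ∪ B)ᶜ) (hAne : A.Nonempty)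
    (hsep : ∀ a ∈ A, ∀ b ∈ B, w a b = 0) :
    ∀ p : V → ℝ, (∑ v, p v = 0) → (∀ v ∈ A, p v = 0) →
      ∃ q : V → ℝ, (∑ v, q v = 0) ∧ (∀ v, v ∉ C → q v = 0) ∧
        ∀ θp θq : V → ℝ,
          weightedLaplacian w *ᵥ θp = p →
          weightedLaplacian w *ᵥ θq = q →
          ∀ u ∈ A ∪ C, ∀ v ∈ A ∪ C, 0 < w u v →
            w u v * (θp u - θp v) = w u v * (θq u - θq v) := by
  intro p hp hpA
  obtain ⟨_, ⟨φ, rfl⟩, hC, hflow⟩ := cut_set_replicates_injections_general w hsym hdiag hnonneg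
    C B hCB A hA hsep p
    (exists_weightedLaplacian_mulVec_eq_of_sum_eq_zero hsym hdiag hnonneg hconn hp) hpA
  exact ⟨_, sum_weightedLaplacian_mulVec hsym hdiag φ, hC,
    fun θp θq hθp hθq u hu v hv _ => hflow θp θq hθp hθq u hu v hv⟩
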